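/- For every nonzero finite-dimensional subspace V ⊆ F₊, the suprema agree: sup_{z ∈ (V ⊕ F₋) \ {0}} ⟨z, Az⟩/‖z‖² = sup_{x ∈ V \ {0}} E(x) (as an equality of suprema, possibly +∞: each real number is an upper bound of one side if and only if it is an upper bound of the other). Consequently, the min-max values λ_k = inf_{V⊆F₊, dim V = k} sup_{z∈(V⊕F₋)\{0}} ⟨z,Az⟩/‖z‖² satisfy λ_k = inf_{V⊆F₊, dim V = k} sup_{x∈V\{0}} E(x). -/

import Mathlib

local notation "⟪" x ", " y "⟫" => @inner ℂ _ _ x y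

/-!
Since `V ⊕ F₋` is the union of the subspaces `span(x) ⊕ F₋` over `x ∈ V \ {0}`, the two suprema
agree as soon as each `E(x)` is finite. Finiteness comes from symmetry: for `u ∈ span(x)` and
`y ∈ F₋` the cross terms `⟨u, Ay⟩ + ⟨y, Au⟩` only involve `Au`, which is at most a multiple of
`‖u‖` on the line `span(x)`, and `‖u‖² + ‖y‖² = ‖u + y‖²` by orthogonality.
-/

open Set

theorem upperBounds_range_sSup {α : Type*} {ι : Sort*} [ConditionallyCompleteLattice α]
    {s : ι → Set α} (hne : ∀ i, (s i).Nonempty) (hbdd : ∀ i, BddAbove (s i)) :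
    upperBounds (range fun i => sSup (s i)) = upperBounds (⋃ i, s i) := by
  simp_rw [range_eq_iUnion, upperBounds_iUnion, upperBounds_singleton,
    (isLUB_csSup (hne _) (hbdd _)).upperBounds_eq]

theorem csSup_eq_csSup_of_upperBounds_eq {α : Type*} [ConditionallyCompleteLinearOrder α]
    {s t : Set α} (hs : s.Nonempty) (ht : t.Nonempty) (h : upperBounds s = upperBounds t) :
    sSup s = sSup t := by
  by_cases hbdd : BddAbove s
  · exact ((isLUB_congr h).mp (isLUB_csSup hs hbdd)).csSup_eq ht |>.symm
  · have hbdd' : ¬BddAbove t := by rwa [BddAbove, ← h]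
    rw [csSup_of_not_bddAbove hbdd, csSup_of_not_bddAbove hbdd']

section Rayleigh

variable {𝕜 H : Type*} [RCLike 𝕜] [NormedAddCommGroup H] [InnerProductSpace 𝕜 H]

theorem isOrtho_eqLocus_id_ker {T : H →ₗ[𝕜] H} (hT : T.IsSymmetric) :
    LinearMap.eqLocus T LinearMap.id ⟂ LinearMap.ker T := by
  refine Submodule.isOrtho_iff_inner_eq.mpr fun x hx y hy => ?_
  calc inner 𝕜 x y = inner 𝕜 (T x) y := by rw [show T x = x from hx]
    _ = inner 𝕜 x (T y) := hT x y
    _ = 0 := by rw [show T y = 0 from hy, inner_zero_right]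

/-- The Rayleigh quotient `⟨z, Az⟩ / ‖z‖²` of a partially defined operator `A`. The real part makes
it real-valued without assuming `A` symmetric; the value at `z = 0` is `0`. -/
noncomputable def rayleighQuotient (A : H →ₗ.[𝕜] H) (z : A.domain) : ℝ :=
  RCLike.re (inner 𝕜 (z : H) (A z)) / ‖(z : H)‖ ^ 2

/-- The values of the Rayleigh quotient on `(V + (F ∩ D(A))) \ {0}`, for `V ⊆ D(A)`. Their supremum
is the quantity minimised over `V` in the min-max principle. -/
def rayleighValues (A : H →ₗ.[𝕜] H) (F V : Submodule 𝕜 H) (hV : V ≤ A.domain) : Set ℝ :=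
  {r | ∃ (v : H) (hv : v ∈ V) (y : A.domain), (y : H) ∈ F ∧ v + (y : H) ≠ 0 ∧
    r = rayleighQuotient A (⟨v, hV hv⟩ + y)}

/-- The values of the Rayleigh quotient on `(span(x) + (F ∩ D(A))) \ {0}`, the vectors of the line
being written `c • x`. -/
def lineRayleighValues (A : H →ₗ.[𝕜] H) (F : Submodule 𝕜 H) (x : A.domain) : Set ℝ :=
  {r | ∃ (c : 𝕜) (y : A.domain), (y : H) ∈ F ∧ c • (x : H) + (y : H) ≠ 0 ∧
    r = rayleighQuotient A (c • x + y)}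

/-- The function `E(x)`, the supremum of the Rayleigh quotient over `(span(x) + F₋) \ {0}`. As a
real supremum it is meaningful only when `lineRayleighValues A F x` is nonempty and bounded. -/
noncomputable def lineRayleighSup (A : H →ₗ.[𝕜] H) (F : Submodule 𝕜 H) (x : A.domain) : ℝ :=
  sSup (lineRayleighValues A F x)

variable {A : H →ₗ.[𝕜] H} {F G V : Submodule 𝕜 H}

theorem rayleighQuotient_add_le (hA : A.IsFormalAdjoint A) {u y : A.domain}
    (huy : inner 𝕜 (u : H) (y : H) = 0) {K lam : ℝ} (hK : 0 ≤ K) (hu : ‖A u‖ ≤ K * ‖(u : H)‖)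
    (hy : RCLike.re (inner 𝕜 (y : H) (A y)) ≤ lam * ‖(y : H)‖ ^ 2) :
    rayleighQuotient A (u + y) ≤ 2 * K + |lam| := by
  refine div_le_of_le_mul₀ (by positivity) (by positivity) ?_
  set a := ‖(u : H)‖
  set b := ‖(y : H)‖
  have pythagoras : ‖(u : H) + (y : H)‖ ^ 2 = a ^ 2 + b ^ 2 := by
    simpa only [sq] using norm_add_sq_eq_norm_sq_add_norm_sq_of_inner_eq_zero (u : H) (y : H) huy
  have diagonal : RCLike.re (inner 𝕜 (u : H) (A u)) ≤ K * a ^ 2 :=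
    calc RCLike.re (inner 𝕜 (u : H) (A u)) ≤ a * ‖A u‖ := re_inner_le_norm _ _
      _ ≤ a * (K * a) := by gcongr
      _ = K * a ^ 2 := by ring
  have cross : RCLike.re (inner 𝕜 (y : H) (A u)) ≤ K * (a * b) :=
    calc RCLike.re (inner 𝕜 (y : H) (A u)) ≤ b * ‖A u‖ := re_inner_le_norm _ _
      _ ≤ b * (K * a) := by gcongr
      _ = K * (a * b) := by ring
  have cross_symm : RCLike.re (inner 𝕜 (u : H) (A y)) = RCLike.re (inner 𝕜 (y : H) (A u)) := by
    rw [← hA, inner_re_symm]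
  calc RCLike.re (inner 𝕜 ((u : H) + (y : H)) (A (u + y)))
      = RCLike.re (inner 𝕜 (u : H) (A u)) + 2 * RCLike.re (inner 𝕜 (y : H) (A u))
          + RCLike.re (inner 𝕜 (y : H) (A y)) := by
        simp only [A.map_add, inner_add_left, inner_add_right, map_add, cross_symm]
        ring
    _ ≤ K * a ^ 2 + K * (2 * a * b) + |lam| * b ^ 2 := by
        linarith [mul_le_mul_of_nonneg_right (le_abs_self lam) (sq_nonneg b)]
    _ ≤ K * a ^ 2 + K * (a ^ 2 + b ^ 2) + |lam| * b ^ 2 := by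
        gcongr
        exact two_mul_le_add_sq a b
    _ ≤ (2 * K + |lam|) * (a ^ 2 + b ^ 2) := by
        linarith [mul_nonneg hK (sq_nonneg b), mul_nonneg (abs_nonneg lam) (sq_nonneg a)]
    _ = (2 * K + |lam|) * ‖(u : H) + (y : H)‖ ^ 2 := by rw [pythagoras]

theorem bddAbove_lineRayleighValues (hA : A.IsFormalAdjoint A) {lam : ℝ}
    (hF : ∀ y : A.domain, (y : H) ∈ F →
      RCLike.re (inner 𝕜 (y : H) (A y)) ≤ lam * ‖(y : H)‖ ^ 2)
    {x : A.domain} (hx : (x : H) ∈ Fᗮ) : BddAbove (lineRayleighValues A F x) := by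
  refine ⟨2 * (‖A x‖ / ‖(x : H)‖) + |lam|, ?_⟩
  rintro _ ⟨c, y, hy, -, rfl⟩
  have norm_map_smul : ‖A (c • x)‖ = ‖A x‖ / ‖(x : H)‖ * ‖((c • x : A.domain) : H)‖ := by
    have norm_map : ‖A x‖ / ‖(x : H)‖ * ‖(x : H)‖ = ‖A x‖ :=
      div_mul_cancel_of_imp fun h => by
        rw [show x = 0 from Subtype.ext (norm_eq_zero.mp h), A.map_zero, norm_zero]
    rw [A.map_smul, Submodule.coe_smul, norm_smul, norm_smul, mul_left_comm, norm_map]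
  refine rayleighQuotient_add_le hA ?_ (by positivity) norm_map_smul.le (hF y hy)
  exact Submodule.inner_left_of_mem_orthogonal hy (Fᗮ.smul_mem c hx)

theorem lineRayleighValues_nonempty {x : A.domain} (hx : (x : H) ≠ 0) :
    (lineRayleighValues A F x).Nonempty :=
  ⟨_, 1, 0, F.zero_mem, by simpa using hx, rfl⟩

theorem rayleighValues_nonempty (hV : V ≤ A.domain) (hV₀ : V ≠ ⊥) :
    (rayleighValues A F V hV).Nonempty := by
  obtain ⟨x, hxV, hx⟩ := V.ne_bot_iff.mp hV₀
  exact ⟨_, x, hxV, 0, F.zero_mem, by simpa using hx, rfl⟩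

theorem rayleighValues_eq_iUnion (hV : V ≤ A.domain) (hV₀ : V ≠ ⊥) :
    rayleighValues A F V hV =
      ⋃ x : {x : A.domain // (x : H) ∈ V ∧ (x : H) ≠ 0}, lineRayleighValues A F x := by
  refine Subset.antisymm ?_ (iUnion_subset ?_)
  · rintro _ ⟨v, hv, y, hy, hvy, rfl⟩
    rw [mem_iUnion]
    rcases eq_or_ne v 0 with rfl | hv₀
    · -- A vector of `F` alone lies over every line of `V`.
      obtain ⟨x, hxV, hx⟩ := V.ne_bot_iff.mp hV₀
      refine ⟨⟨⟨x, hV hxV⟩, hxV, hx⟩, 0, y, hy, by simpa using hvy, ?_⟩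
      rw [zero_smul]
      rfl
    · exact ⟨⟨⟨v, hV hv⟩, hv, hv₀⟩, 1, y, hy, by simpa using hvy, by rw [one_smul]⟩
  · rintro ⟨x, hxV, _⟩ _ ⟨c, y, hy, hxy, rfl⟩
    exact ⟨c • (x : H), V.smul_mem c hxV, y, hy, hxy, rfl⟩

theorem upperBounds_rayleighValues (hA : A.IsFormalAdjoint A) {lam : ℝ}
    (hF : ∀ y : A.domain, (y : H) ∈ F →
      RCLike.re (inner 𝕜 (y : H) (A y)) ≤ lam * ‖(y : H)‖ ^ 2)
    (hV : V ≤ A.domain) (hVF : V ⟂ F) (hV₀ : V ≠ ⊥) :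
    upperBounds (rayleighValues A F V hV) =
      upperBounds {r | ∃ x : A.domain, (x : H) ∈ V ∧ (x : H) ≠ 0 ∧ r = lineRayleighSup A F x} := by
  rw [rayleighValues_eq_iUnion hV hV₀, ← upperBounds_range_sSup
    (fun x => lineRayleighValues_nonempty x.2.2)
    (fun x => bddAbove_lineRayleighValues hA hF (hVF x.2.1))]
  congr 1
  ext r
  simp only [mem_range, Subtype.exists, exists_prop, mem_ofPred_eq, and_assoc, eq_comm (a := r),
    lineRayleighSup]

theorem sSup_rayleighValues (hA : A.IsFormalAdjoint A) {lam : ℝ}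
    (hF : ∀ y : A.domain, (y : H) ∈ F →
      RCLike.re (inner 𝕜 (y : H) (A y)) ≤ lam * ‖(y : H)‖ ^ 2)
    (hV : V ≤ A.domain) (hVF : V ⟂ F) (hV₀ : V ≠ ⊥) :
    sSup (rayleighValues A F V hV) =
      sSup {r | ∃ x : A.domain, (x : H) ∈ V ∧ (x : H) ≠ 0 ∧ r = lineRayleighSup A F x} := by
  obtain ⟨x, hxV, hx⟩ := V.ne_bot_iff.mp hV₀
  exact csSup_eq_csSup_of_upperBounds_eq (rayleighValues_nonempty hV hV₀)
    ⟨_, ⟨x, hV hxV⟩, hxV, hx, rfl⟩ (upperBounds_rayleighValues hA hF hV hVF hV₀)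

theorem minmax_via_Ex_general (hA : A.IsFormalAdjoint A) (hGF : G ⟂ F) {lam : ℝ}
    (hF : ∀ y : A.domain, (y : H) ∈ F →
      RCLike.re (inner 𝕜 (y : H) (A y)) ≤ lam * ‖(y : H)‖ ^ 2) :
    (∀ (V : Submodule 𝕜 H) (hV : V ≤ A.domain), V ≤ G → V ≠ ⊥ →
      upperBounds (rayleighValues A F V hV) =
        upperBounds {r | ∃ x : A.domain,
          (x : H) ∈ V ∧ (x : H) ≠ 0 ∧ r = lineRayleighSup A F x}) ∧
    (∀ k : ℕ, 0 < k →
      {r | ∃ (V : Submodule 𝕜 H) (hV : V ≤ A.domain), V ≤ G ∧ Module.finrank 𝕜 V = k ∧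
        r = sSup (rayleighValues A F V hV)} =
      {r | ∃ V : Submodule 𝕜 H, V ≤ A.domain ∧ V ≤ G ∧ Module.finrank 𝕜 V = k ∧
        r = sSup {s | ∃ x : A.domain,
          (x : H) ∈ V ∧ (x : H) ≠ 0 ∧ s = lineRayleighSup A F x}}) := by
  refine ⟨fun V hV hVG => upperBounds_rayleighValues hA hF hV (hGF.mono_left hVG),
    fun k hk => ?_⟩
  ext r
  simp only [mem_ofPred_eq, ← exists_prop (a := _ ≤ A.domain)]
  refine exists_congr fun V => exists_congr fun hV =>
    and_congr_right fun hVG => and_congr_right fun hVk => ?_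
  have hV₀ : V ≠ ⊥ := by
    rintro rfl
    exact hk.ne (finrank_bot 𝕜 H ▸ hVk)
  rw [sSup_rayleighValues hA hF hV (hGF.mono_left hVG) hV₀]

end Rayleigh

/-- For every nonzero finite-dimensional subspace `V ⊆ F₊` the suprema agree:
a real number `b` is an upper bound of `{⟨z,Az⟩/‖z‖² : z ∈ (V ⊕ F₋) \ {0}}` if and only if
it is an upper bound of `{E(x) : x ∈ V \ {0}}`, where
`E(x) = sup_{z ∈ (span(x) ⊕ F₋) \ {0}} ⟨z,Az⟩/‖z‖²`. Consequently, for every `k ≥ 1`, the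
min-max values `λ_k = inf_{V ⊆ F₊, dim V = k} sup_{z ∈ (V⊕F₋)\{0}} ⟨z,Az⟩/‖z‖²` satisfy
`λ_k = inf_{V ⊆ F₊, dim V = k} sup_{x ∈ V\{0}} E(x)`. -/
theorem minmax_via_Ex
    {H : Type*} [NormedAddCommGroup H] [InnerProductSpace ℂ H] [CompleteSpace H]
    (A : H →ₗ.[ℂ] H)
    (hdense : Dense (A.domain : Set H))
    (hsymm : ∀ x y : A.domain, ⟪A x, (y : H)⟫ = ⟪(x : H), A y⟫)
    (P : H →L[ℂ] H)
    (hPsa : ∀ u v : H, ⟪P u, v⟫ = ⟪u, P v⟫)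
    (hPidem : ∀ u : H, P (P u) = P u)
    (hPinv : ∀ x ∈ A.domain, P x ∈ A.domain)
    (lam0 lam1 : ℝ) (hgap : lam0 < lam1)
    (hlam0 : ∀ y : A.domain, P (y : H) = 0 →
      (⟪(y : H), A y⟫).re ≤ lam0 * ‖(y : H)‖ ^ 2)
    (hlam1a : ∀ x : A.domain, P (x : H) = (x : H) → (x : H) ≠ 0 → ∀ ε > 0,
      ∃ y : A.domain, P (y : H) = 0 ∧
        (lam1 - ε) * ‖(x : H) + (y : H)‖ ^ 2 ≤ (⟪(x : H) + (y : H), A (x + y)⟫).re)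
    (hlam1b : ∀ μ : ℝ, lam1 < μ → ∃ x : A.domain, P (x : H) = (x : H) ∧ (x : H) ≠ 0 ∧
      ∀ y : A.domain, P (y : H) = 0 →
        (⟪(x : H) + (y : H), A (x + y)⟫).re ≤ μ * ‖(x : H) + (y : H)‖ ^ 2)
    (TE : A.domain → Set ℝ)
    (hTE : ∀ x : A.domain, TE x = {r : ℝ | ∃ (c : ℂ) (y : A.domain), P (y : H) = 0 ∧
      c • (x : H) + (y : H) ≠ 0 ∧
      r = (⟪c • (x : H) + (y : H), A (c • x + y)⟫).re / ‖c • (x : H) + (y : H)‖ ^ 2}) :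
    (∀ (V : Submodule ℂ H) (hVA : ∀ v ∈ V, v ∈ A.domain),
      (∀ v ∈ V, P v = v) → V ≠ ⊥ → FiniteDimensional ℂ V →
      ∀ b : ℝ,
        (b ∈ upperBounds {r : ℝ | ∃ (v : H) (hv : v ∈ V) (y : A.domain),
            P (y : H) = 0 ∧ v + (y : H) ≠ 0 ∧
            r = (⟪v + (y : H), A (⟨v, hVA v hv⟩ + y)⟫).re / ‖v + (y : H)‖ ^ 2} ↔
          b ∈ upperBounds {r : ℝ | ∃ x : A.domain,
            (x : H) ∈ V ∧ (x : H) ≠ 0 ∧ r = sSup (TE x)})) ∧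
    (∀ k : ℕ, 0 < k →
      sInf {r : ℝ | ∃ (V : Submodule ℂ H) (hVA : ∀ v ∈ V, v ∈ A.domain),
          (∀ v ∈ V, P v = v) ∧ Module.finrank ℂ V = k ∧
          r = sSup {s : ℝ | ∃ (v : H) (hv : v ∈ V) (y : A.domain),
              P (y : H) = 0 ∧ v + (y : H) ≠ 0 ∧
              s = (⟪v + (y : H), A (⟨v, hVA v hv⟩ + y)⟫).re / ‖v + (y : H)‖ ^ 2}} =
      sInf {r : ℝ | ∃ V : Submodule ℂ H, (∀ v ∈ V, v ∈ A.domain) ∧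
          (∀ v ∈ V, P v = v) ∧ Module.finrank ℂ V = k ∧
          r = sSup {s : ℝ | ∃ x : A.domain,
              (x : H) ∈ V ∧ (x : H) ≠ 0 ∧ s = sSup (TE x)}}) := by
  obtain rfl := funext hTE
  have h := minmax_via_Ex_general hsymm (isOrtho_eqLocus_id_ker (T := P.toLinearMap) hPsa) hlam0
  exact ⟨fun V hVA hVP hV _ => Set.ext_iff.mp (h.1 V hVA hVP hV),
    fun k hk => congrArg sInf (h.2 k hk)⟩
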